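/- arXiv:0708.4250 — 3 statements merged into one kernel-verified Lean document; each statement's English description precedes it below -/
import Mathlib

section
/- (Ghys–Sergiescu) Every element of Thompson's group T has a periodic point: for every f in T there exist a point x of the circle ℝ/ℤ and a positive integer n such that the n-th iterate of f fixes x, i.e. f^[n](x) = x. -/
open Set

/-- The group of self-homeomorphisms of a topological space,
with `(f * g) x = f (g x)`. -/
instance homeomorphGroup (X : Type*) [TopologicalSpace X] : Group (X ≃ₜ X) where
  mul f g := g.trans f
  one := Homeomorph.refl X
  inv := Homeomorph.symm
  mul_assoc _ _ _ := Homeomorph.ext fun _ => rfl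
  one_mul _ := Homeomorph.ext fun _ => rfl
  mul_one _ := Homeomorph.ext fun _ => rfl
  inv_mul_cancel a := Homeomorph.ext fun x => a.symm_apply_apply x

/-- A real number is a dyadic rational if it has the form `a / 2 ^ b`. -/
def IsDyadic (x : ℝ) : Prop := ∃ a : ℤ, ∃ b : ℕ, x = (a : ℝ) / 2 ^ b

/-- A point of the circle `ℝ/ℤ` is dyadic if it is the image of a dyadic rational. -/
def IsDyadicPt (x : AddCircle (1:ℝ)) : Prop :=
  ∃ r : ℝ, IsDyadic r ∧ (r : AddCircle (1:ℝ)) = x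

/-- `F : ℝ → ℝ` is a lift of the circle map `f` if `F (x+1) = F x + 1` and the
reduction of `F` modulo 1 is `f`. -/
def IsLiftOf (f : AddCircle (1:ℝ) ≃ₜ AddCircle (1:ℝ)) (F : ℝ → ℝ) : Prop :=
  (∀ x : ℝ, F (x + 1) = F x + 1) ∧
  ∀ x : ℝ, f (x : AddCircle (1:ℝ)) = ((F x : ℝ) : AddCircle (1:ℝ))

/-- A self-homeomorphism of the circle `ℝ/ℤ` belongs to Thompson's group `T` iff it maps
the set of dyadic points onto itself and has an increasing lift `F : ℝ → ℝ` that is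
piecewise linear with respect to a finite dyadic partition `0 = t 0 < ⋯ < t m = 1`,
every slope being an integer power of `2` and every breakpoint `(t i, F (t i))`
having dyadic rational coordinates. -/
def InThompsonT (f : AddCircle (1:ℝ) ≃ₜ AddCircle (1:ℝ)) : Prop :=
  (∀ x, IsDyadicPt x ↔ IsDyadicPt (f x)) ∧
  ∃ F : ℝ → ℝ, StrictMono F ∧ IsLiftOf f F ∧
    ∃ m : ℕ, ∃ t : Fin (m + 1) → ℝ,
      StrictMono t ∧ t 0 = 0 ∧ t (Fin.last m) = 1 ∧
      (∀ i, IsDyadic (t i) ∧ IsDyadic (F (t i))) ∧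
      ∀ i : Fin m, ∃ k : ℤ, ∃ c : ℝ,
        ∀ x ∈ Icc (t i.castSucc) (t i.succ), F x = (2 : ℝ) ^ k * x + c

/-!
The dyadic points of a given order in `ℝ/ℤ` are finite in number, so if the orbit of `0` under
`f ∈ T` is infinite, then the orders of its points tend to infinity. Fix `M` so large that `f` is
affine on every standard dyadic arc of length `2⁻ᴹ`. At a point of order at least `2ᴹ`, a slope `2ᵏ`
divides the order by at least `2ᵏ`. Hence, if `x` is a point of the orbit whose order is minimal
among those of `x, f x, f² x, …`, and these orders are all at least `2ᴹ`, then no iterate of `f`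
expands at `x`, and every iterate maps the standard dyadic arc of length `2⁻ᴹ` at `x` into such an
arc. There are infinitely many such `x` and finitely many such arcs, so a power of `f` maps some arc
into itself, and therefore has a fixed point.
-/

open Filter

/-- The half-open standard dyadic interval `[a / 2 ^ k, (a + 1) / 2 ^ k)` that contains `x`. -/
def dyadicCell (k : ℕ) (x : ℝ) : Set ℝ := {y | ⌊2 ^ k * y⌋ = ⌊2 ^ k * x⌋}

/-- `F` is affine on `s`, of the form `x ↦ (2 ^ k * x + c) / 2 ^ b` with `c` an integer. On a
standard dyadic interval of length `2⁻ᵏ` this says that `F` maps it affinely onto a standard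
dyadic interval of length `2⁻ᵇ`. -/
def DyadicAffineOn (F : ℝ → ℝ) (k : ℕ) (s : Set ℝ) : Prop :=
  ∃ b : ℕ, ∃ c : ℤ, ∀ x ∈ s, 2 ^ b * F x = 2 ^ k * x + c

section DyadicCell

variable {k : ℕ} {x y : ℝ}

lemma mem_dyadicCell : y ∈ dyadicCell k x ↔ ⌊2 ^ k * y⌋ = ⌊2 ^ k * x⌋ :=
  Iff.rfl

lemma dyadicCell_eq_Ico (k : ℕ) (x : ℝ) :
    dyadicCell k x = Ico ((⌊2 ^ k * x⌋ : ℝ) / 2 ^ k) ((⌊2 ^ k * x⌋ + 1) / 2 ^ k) := by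
  ext y
  have h2k : (0 : ℝ) < 2 ^ k := by positivity
  rw [mem_Ico, div_le_iff₀' h2k, lt_div_iff₀' h2k, ← Int.floor_eq_iff, mem_dyadicCell]

lemma dyadicCell_subset_of_le {j : ℕ} (hjk : j ≤ k) (x : ℝ) : dyadicCell k x ⊆ dyadicCell j x := by
  have floor_coarse (z : ℝ) : ⌊2 ^ j * z⌋ = ⌊2 ^ k * z⌋ / (2 ^ (k - j) : ℕ) := by
    rw [← Int.floor_div_natCast, ← Nat.add_sub_of_le hjk, pow_add, Nat.add_sub_cancel_left]
    push_cast
    field_simp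
  intro y hy
  rw [mem_dyadicCell, floor_coarse, floor_coarse, mem_dyadicCell.1 hy]

lemma le_iff_le_of_mem_dyadicCell {r : ℝ} (hr : ∃ a : ℤ, 2 ^ k * r = a)
    (hy : y ∈ dyadicCell k x) : r ≤ y ↔ r ≤ x := by
  obtain ⟨a, ha⟩ := hr
  have le_iff (z : ℝ) : r ≤ z ↔ a ≤ ⌊2 ^ k * z⌋ := by
    rw [Int.le_floor, ← ha, mul_le_mul_iff_right₀ (by positivity)]
  rw [le_iff, le_iff, hy]

lemma exists_eq_add_int_of_mapsTo_dyadicCell {G : ℝ → ℝ} (hG : Continuous G) {p : ℤ}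
    (hp : ⌊2 ^ k * G x⌋ = ⌊2 ^ k * x⌋ + 2 ^ k * p)
    (hmaps : MapsTo G (dyadicCell k x) (dyadicCell k (G x))) : ∃ z, G z = z + p := by
  have hmaps_sub : MapsTo (fun z ↦ G z - p) (dyadicCell k x) (dyadicCell k x) := by
    intro z hz
    have hGz : ⌊2 ^ k * G z⌋ = ⌊2 ^ k * x⌋ + 2 ^ k * p := (hmaps hz).trans hp
    have hshift : (2 : ℝ) ^ k * (G z - p) = 2 ^ k * G z - (2 ^ k * p : ℤ) := by push_cast; ring
    rw [mem_dyadicCell, hshift, Int.floor_sub_intCast, hGz, add_sub_cancel_right]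
  have hlt : (⌊2 ^ k * x⌋ : ℝ) / 2 ^ k < (⌊2 ^ k * x⌋ + 1) / 2 ^ k := by
    gcongr
    exact lt_add_one _
  have hcont : Continuous fun z ↦ G z - p := hG.sub continuous_const
  have hmaps_closure := hmaps_sub.closure hcont
  rw [dyadicCell_eq_Ico, closure_Ico hlt.ne] at hmaps_closure
  obtain ⟨z, -, hz⟩ :=
    exists_mem_Icc_isFixedPt_of_mapsTo hcont.continuousOn hlt.le hmaps_closure
  exact ⟨z, sub_eq_iff_eq_add.1 hz⟩

end DyadicCell

section Circle

lemma coe_unitAddCircle_eq_iff {x y : ℝ} :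
    (x : UnitAddCircle) = y ↔ ∃ n : ℤ, x = y + n := by
  rw [← sub_eq_zero, ← AddCircle.coe_sub, AddCircle.coe_eq_zero_iff]
  simp only [zsmul_one, eq_comm (b := x - y), sub_eq_iff_eq_add']

lemma nsmul_coe_unitAddCircle_eq_zero_iff {n : ℕ} {x : ℝ} :
    n • (x : UnitAddCircle) = 0 ↔ ∃ a : ℤ, n * x = a := by
  rw [← AddCircle.coe_nsmul, AddCircle.coe_eq_zero_iff]
  simp only [zsmul_one, nsmul_eq_mul, eq_comm]

lemma addOrderOf_mul_dvd_of_affine {k b : ℕ} {c : ℤ} {x y : ℝ}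
    (hxy : 2 ^ b * y = 2 ^ k * x + c) (hk : 2 ^ k ∣ addOrderOf (x : UnitAddCircle)) :
    addOrderOf (y : UnitAddCircle) * 2 ^ k ∣ addOrderOf (x : UnitAddCircle) * 2 ^ b := by
  obtain ⟨m, hm⟩ := hk
  obtain ⟨a, ha⟩ := nsmul_coe_unitAddCircle_eq_zero_iff.1
    (addOrderOf_nsmul_eq_zero (x : UnitAddCircle))
  have hy : (m * 2 ^ b) • (y : UnitAddCircle) = 0 := by
    refine nsmul_coe_unitAddCircle_eq_zero_iff.2 ⟨a + m * c, ?_⟩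
    rw [hm] at ha
    push_cast at ha ⊢
    linear_combination (m : ℝ) * hxy + ha
  rw [hm, mul_assoc, mul_comm (2 ^ k)]
  exact mul_dvd_mul_right (addOrderOf_dvd_of_nsmul_eq_zero hy) _

lemma IsDyadicPt.exists_addOrderOf_eq_two_pow {x : UnitAddCircle} (hx : IsDyadicPt x) :
    ∃ j : ℕ, addOrderOf x = 2 ^ j := by
  obtain ⟨_, ⟨a, b, rfl⟩, rfl⟩ := hx
  have htorsion : 2 ^ b • (((a : ℝ) / 2 ^ b : ℝ) : UnitAddCircle) = 0 := by
    refine nsmul_coe_unitAddCircle_eq_zero_iff.2 ⟨a, ?_⟩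
    push_cast
    field_simp
  obtain ⟨j, -, hj⟩ := (Nat.dvd_prime_pow Nat.prime_two).1
    (addOrderOf_dvd_of_nsmul_eq_zero htorsion)
  exact ⟨j, hj⟩

lemma IsDyadicPt.isOfFinAddOrder {x : UnitAddCircle} (hx : IsDyadicPt x) :
    IsOfFinAddOrder x := by
  obtain ⟨j, hj⟩ := hx.exists_addOrderOf_eq_two_pow
  exact addOrderOf_pos_iff.1 (hj ▸ by positivity)

lemma eventually_two_pow_dvd_addOrderOf {u : ℕ → UnitAddCircle} (hinj : Function.Injective u)
    (hu : ∀ n, IsDyadicPt (u n)) (k : ℕ) : ∀ᶠ n in atTop, 2 ^ k ∣ addOrderOf (u n) := by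
  have hfin : {x : UnitAddCircle | 2 ^ k • x = 0}.Finite :=
    AddCircle.finite_torsion 1 (by positivity)
  rw [← Nat.cofinite_eq_atTop]
  filter_upwards [hinj.tendsto_cofinite.eventually hfin.eventually_cofinite_notMem] with n hn
  obtain ⟨j, hj⟩ := (hu n).exists_addOrderOf_eq_two_pow
  rw [← addOrderOf_dvd_iff_nsmul_eq_zero, hj] at hn
  rw [hj]
  exact pow_dvd_pow 2 (le_of_not_ge fun hjk ↦ hn (pow_dvd_pow 2 hjk))

end Circle

section Dynamics

lemma infinite_setOf_forall_ge_le {α : Type*} [LinearOrder α] [WellFoundedLT α] (u : ℕ → α) :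
    {n | ∀ m ≥ n, u n ≤ u m}.Infinite := by
  refine Nat.frequently_atTop_iff_infinite.1 (frequently_atTop.2 fun N ↦ ?_)
  have hN : (Ici N).Nonempty := nonempty_Ici
  have hmem : N ≤ Function.argminOn u (Ici N) hN := Function.argminOn_mem u (Ici N) hN
  exact ⟨_, hmem, fun m hm ↦ Function.argminOn_le u (Ici N) (hmem.trans hm)⟩

variable {F : ℝ → ℝ} {M : ℕ}

lemma mapsTo_dyadicCell_of_affine {b : ℕ} {c : ℤ} {x : ℝ}
    (h : ∀ y ∈ dyadicCell M x, 2 ^ b * F y = 2 ^ M * y + c) (s : ℕ) :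
    MapsTo F (dyadicCell (M + s) x) (dyadicCell (b + s) (F x)) := by
  have floor_eq (y : ℝ) (hy : y ∈ dyadicCell M x) :
      ⌊2 ^ (b + s) * F y⌋ = ⌊2 ^ (M + s) * y⌋ + 2 ^ s * c := by
    have hFy : 2 ^ (b + s) * F y = 2 ^ (M + s) * y + (2 ^ s * c : ℤ) := by
      push_cast
      linear_combination (2 : ℝ) ^ s * h y hy
    rw [hFy, Int.floor_add_intCast]
  intro y hy
  rw [mem_dyadicCell, floor_eq y (dyadicCell_subset_of_le (Nat.le_add_right M s) x hy),
    floor_eq x rfl, hy]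

lemma exists_mapsTo_iterate_dyadicCell (hF : ∀ x, DyadicAffineOn F M (dyadicCell M x)) {x : ℝ}
    (hfin : IsOfFinAddOrder (x : UnitAddCircle))
    (hdvd : ∀ n, 2 ^ M ∣ addOrderOf (F^[n] x : UnitAddCircle))
    (hmin : ∀ n, addOrderOf (x : UnitAddCircle) ≤ addOrderOf (F^[n] x : UnitAddCircle))
    (n : ℕ) :
    ∃ s, addOrderOf (F^[n] x : UnitAddCircle) ≤ addOrderOf (x : UnitAddCircle) * 2 ^ s ∧
      MapsTo F^[n] (dyadicCell M x) (dyadicCell (M + s) (F^[n] x)) := by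
  have hpos : 0 < addOrderOf (x : UnitAddCircle) := hfin.addOrderOf_pos
  induction n with
  | zero => exact ⟨0, by simp, mapsTo_id _⟩
  | succ n ih =>
    obtain ⟨s, hs, hmaps⟩ := ih
    obtain ⟨b, c, haff⟩ := hF (F^[n] x)
    have hstep : addOrderOf (F^[n + 1] x : UnitAddCircle) * 2 ^ M ≤
        addOrderOf (x : UnitAddCircle) * 2 ^ (b + s) := by
      rw [Function.iterate_succ_apply']
      calc
        _ ≤ addOrderOf (F^[n] x : UnitAddCircle) * 2 ^ b :=
          Nat.le_of_dvd (Nat.mul_pos (hpos.trans_le (hmin n)) (by positivity))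
            (addOrderOf_mul_dvd_of_affine (haff _ rfl) (hdvd n))
        _ ≤ addOrderOf (x : UnitAddCircle) * 2 ^ s * 2 ^ b := by gcongr
        _ = _ := by ring
    have hMbs : M ≤ b + s := by
      refine (Nat.pow_le_pow_iff_right one_lt_two).1 (Nat.le_of_mul_le_mul_left ?_ hpos)
      exact (Nat.mul_le_mul_right _ (hmin (n + 1))).trans hstep
    obtain ⟨s', hs'⟩ := Nat.exists_eq_add_of_le hMbs
    refine ⟨s', ?_, ?_⟩
    · rw [hs', pow_add, mul_left_comm, mul_comm (2 ^ M)] at hstep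
      exact Nat.le_of_mul_le_mul_right hstep (by positivity)
    · rw [Function.iterate_succ_apply', Function.iterate_succ', ← hs']
      exact (mapsTo_dyadicCell_of_affine haff s).comp hmaps

theorem exists_iterate_eq_add_int (hcont : Continuous F)
    (hF : ∀ x, DyadicAffineOn F M (dyadicCell M x)) {x : ℝ}
    (hfin : ∀ n, IsOfFinAddOrder (F^[n] x : UnitAddCircle))
    (hdvd : ∀ n, 2 ^ M ∣ addOrderOf (F^[n] x : UnitAddCircle)) :
    ∃ n > 0, ∃ z, ∃ p : ℤ, F^[n] z = z + p := by
  obtain ⟨m, hm, n, -, hmn, hcell⟩ :=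
    (infinite_setOf_forall_ge_le fun n ↦ addOrderOf (F^[n] x : UnitAddCircle)
      ).exists_lt_map_eq_of_mapsTo (mapsTo_univ (fun n ↦ (⌊2 ^ M * F^[n] x⌋ : ZMod (2 ^ M))) _)
      finite_univ
  obtain ⟨p, hp⟩ := (ZMod.intCast_eq_intCast_iff_dvd_sub _ _ _).1 hcell
  have iterate_from_m (j : ℕ) : F^[j] (F^[m] x) = F^[j + m] x :=
    (Function.iterate_add_apply F j m x).symm
  obtain ⟨s, -, hmaps⟩ := exists_mapsTo_iterate_dyadicCell hF (hfin m)
    (fun j ↦ iterate_from_m j ▸ hdvd (j + m))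
    (fun j ↦ iterate_from_m j ▸ hm (j + m) (Nat.le_add_left m j)) (n - m)
  have hreturn : ⌊2 ^ M * F^[n - m] (F^[m] x)⌋ = ⌊2 ^ M * F^[m] x⌋ + 2 ^ M * p := by
    rw [iterate_from_m, Nat.sub_add_cancel hmn.le, ← sub_eq_iff_eq_add', hp]
    push_cast
    rfl
  obtain ⟨z, hz⟩ := exists_eq_add_int_of_mapsTo_dyadicCell (hcont.iterate (n - m)) hreturn
    (hmaps.mono_right (dyadicCell_subset_of_le (Nat.le_add_right M s) _))
  exact ⟨n - m, Nat.sub_pos_of_lt hmn, z, p, hz⟩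

end Dynamics

section PiecewiseLinear

variable {F : ℝ → ℝ} {k : ℕ} {s t : Set ℝ}

lemma IsDyadic.eventually_exists_two_pow_mul_eq_int {r : ℝ} (hr : IsDyadic r) :
    ∀ᶠ k : ℕ in atTop, ∃ a : ℤ, 2 ^ k * r = a := by
  obtain ⟨a, b, rfl⟩ := hr
  filter_upwards [eventually_ge_atTop b] with k hbk
  refine ⟨2 ^ (k - b) * a, ?_⟩
  rw [← Nat.add_sub_of_le hbk, pow_add, Nat.add_sub_cancel_left]
  push_cast
  field_simp

lemma DyadicAffineOn.mono (h : DyadicAffineOn F k t) (hst : s ⊆ t) : DyadicAffineOn F k s := by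
  obtain ⟨b, c, hbc⟩ := h
  exact ⟨b, c, fun x hx ↦ hbc x (hst hx)⟩

lemma DyadicAffineOn.preimage_sub_int (hF : ∀ x (n : ℤ), F (x + n) = F x + n)
    (h : DyadicAffineOn F k s) (n : ℤ) : DyadicAffineOn F k ((· - (n : ℝ)) ⁻¹' s) := by
  obtain ⟨b, c, hbc⟩ := h
  refine ⟨b, c + 2 ^ b * n - 2 ^ k * n, fun x hx ↦ ?_⟩
  have hFx : F x = F (x - n) + n := by rw [← hF, sub_add_cancel]
  push_cast
  linear_combination (2 : ℝ) ^ b * hFx + hbc (x - n) hx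

lemma eventually_dyadicAffineOn {r : ℝ} (hr : IsDyadic r) (hFr : IsDyadic (F r)) (hrs : r ∈ s)
    {e : ℤ} {d : ℝ} (hF : ∀ x ∈ s, F x = 2 ^ e * x + d) : ∀ᶠ k in atTop, DyadicAffineOn F k s := by
  obtain ⟨b₀, hb₀⟩ := eventually_atTop.1 hFr.eventually_exists_two_pow_mul_eq_int
  filter_upwards [hr.eventually_exists_two_pow_mul_eq_int,
    eventually_ge_atTop (b₀ + e.toNat)] with k ⟨a, ha⟩ hk
  obtain ⟨b, hb⟩ : ∃ b : ℕ, (k : ℤ) = b + e := ⟨(k - e).toNat, by omega⟩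
  obtain ⟨a', ha'⟩ := hb₀ b (by omega)
  have hslope : (2 : ℝ) ^ b * 2 ^ e = 2 ^ k := by
    rw [← zpow_natCast, ← zpow_natCast, hb, zpow_add₀ two_ne_zero]
  refine ⟨b, a' - a, fun x hx ↦ ?_⟩
  push_cast
  rw [← ha, ← ha', hF x hx, hF r hrs]
  linear_combination (x - r) * hslope

lemma exists_fin_mem_Ico {α : Type*} [LinearOrder α] {m : ℕ} {t : Fin (m + 1) → α} {x : α}
    (hx : x ∈ Ico (t 0) (t (Fin.last m))) : ∃ i : Fin m, x ∈ Ico (t i.castSucc) (t i.succ) := by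
  by_contra! hnot
  have hle (i : Fin (m + 1)) : t i ≤ x := by
    induction i using Fin.induction with
    | zero => exact hx.1
    | succ i ih => exact le_of_not_gt fun hlt ↦ hnot i ⟨ih, hlt⟩
  exact (hle _).not_gt hx.2

lemma dyadicCell_subset_preimage_sub_int_Icc {l r x : ℝ} (hl : ∃ a : ℤ, 2 ^ k * l = a)
    (hr : ∃ a : ℤ, 2 ^ k * r = a) {n : ℤ} (hx : x - n ∈ Ico l r) :
    dyadicCell k x ⊆ (· - (n : ℝ)) ⁻¹' Icc l r := by
  have add_int {z : ℝ} (hz : ∃ a : ℤ, 2 ^ k * z = a) : ∃ a : ℤ, 2 ^ k * (z + n) = a := by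
    obtain ⟨a, ha⟩ := hz
    exact ⟨a + 2 ^ k * n, by push_cast; rw [← ha]; ring⟩
  intro y hy
  have hly := (le_iff_le_of_mem_dyadicCell (add_int hl) hy).2 (le_sub_iff_add_le.1 hx.1)
  have hyr := (le_iff_le_of_mem_dyadicCell (add_int hr) hy).not.2
    (not_le.2 (sub_lt_iff_lt_add.1 hx.2))
  exact ⟨le_sub_iff_add_le.2 hly, sub_le_iff_le_add.2 (le_of_not_ge hyr)⟩

lemma exists_forall_dyadicAffineOn_dyadicCell (hF : ∀ x (n : ℤ), F (x + n) = F x + n) {m : ℕ}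
    {t : Fin (m + 1) → ℝ} (ht : Monotone t) (ht0 : t 0 = 0) (ht1 : t (Fin.last m) = 1)
    (hdyadic : ∀ i, IsDyadic (t i) ∧ IsDyadic (F (t i)))
    (haffine : ∀ i : Fin m, ∃ e : ℤ, ∃ d : ℝ,
      ∀ x ∈ Icc (t i.castSucc) (t i.succ), F x = 2 ^ e * x + d) :
    ∃ M, ∀ x, DyadicAffineOn F M (dyadicCell M x) := by
  have hbreak : ∀ᶠ M : ℕ in atTop, ∀ i, ∃ a : ℤ, 2 ^ M * t i = a :=
    eventually_all.2 fun i ↦ (hdyadic i).1.eventually_exists_two_pow_mul_eq_int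
  have hpiece : ∀ᶠ M in atTop, ∀ i : Fin m, DyadicAffineOn F M (Icc (t i.castSucc) (t i.succ)) := by
    refine eventually_all.2 fun i ↦ ?_
    obtain ⟨e, d, hed⟩ := haffine i
    exact eventually_dyadicAffineOn (hdyadic _).1 (hdyadic _).2
      (left_mem_Icc.2 (ht i.castSucc_lt_succ.le)) hed
  obtain ⟨M, hM, hMpiece⟩ := (hbreak.and hpiece).exists
  refine ⟨M, fun x ↦ ?_⟩
  have hfract : x - ⌊x⌋ ∈ Ico (t 0) (t (Fin.last m)) := by
    rw [ht0, ht1]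
    exact ⟨Int.fract_nonneg x, Int.fract_lt_one x⟩
  obtain ⟨i, hi⟩ := exists_fin_mem_Ico hfract
  exact ((hMpiece i).preimage_sub_int hF ⌊x⌋).mono
    (dyadicCell_subset_preimage_sub_int_Icc (hM _) (hM _) hi)

end PiecewiseLinear

namespace IsLiftOf

variable {f : UnitAddCircle ≃ₜ UnitAddCircle} {F : ℝ → ℝ}

lemma map_add_int (h : IsLiftOf f F) (x : ℝ) (n : ℤ) : F (x + n) = F x + n :=
  AddConstMapClass.map_add_int (⟨F, h.1⟩ : AddConstMap ℝ ℝ 1 1) x n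

lemma iterate_coe (h : IsLiftOf f F) (n : ℕ) (x : ℝ) :
    f^[n] (x : UnitAddCircle) = (F^[n] x : ℝ) :=
  ((show Function.Semiconj ((↑) : ℝ → UnitAddCircle) F f from
    fun x ↦ (h.2 x).symm).iterate_right n x).symm

lemma surjective (h : IsLiftOf f F) : Function.Surjective F := by
  intro y
  obtain ⟨x, hx⟩ := f.surjective y
  obtain ⟨x, rfl⟩ := QuotientAddGroup.mk_surjective x
  obtain ⟨n, hn⟩ := coe_unitAddCircle_eq_iff.1 (hx.symm.trans (h.2 x))
  exact ⟨x + n, by rw [h.map_add_int, hn]⟩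

end IsLiftOf

lemma InThompsonT.isDyadicPt_iterate_zero {f : UnitAddCircle ≃ₜ UnitAddCircle}
    (hf : InThompsonT f) (n : ℕ) : IsDyadicPt (f^[n] 0) := by
  induction n with
  | zero => exact ⟨0, ⟨0, 0, by simp⟩, rfl⟩
  | succ n ih => exact Function.iterate_succ_apply' f n 0 ▸ (hf.1 _).1 ih

/-- (Ghys–Sergiescu) Every element of Thompson's group `T` has a periodic point: for
every `f ∈ T` there are a point `x` of the circle `ℝ/ℤ` and a positive integer `n`
with `f^[n] x = x`. -/
theorem thompsonT_periodic_point :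
    ∀ f : AddCircle (1:ℝ) ≃ₜ AddCircle (1:ℝ), InThompsonT f →
      ∃ x : AddCircle (1:ℝ), ∃ n : ℕ, 0 < n ∧ (⇑f)^[n] x = x := by
  intro f hf
  by_contra! hnonper
  have hinj : Function.Injective fun n ↦ f^[n] 0 :=
    .of_lt_imp_ne fun m n hmn heq ↦
      hnonper 0 (n - m) (Nat.sub_pos_of_lt hmn) (Function.iterate_cancel f.injective heq.symm)
  have hdyadic : ∀ n, IsDyadicPt (f^[n] 0) := hf.isDyadicPt_iterate_zero
  obtain ⟨-, F, hmono, hlift, m, t, ht, ht0, ht1, hbreak, haffine⟩ := hf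
  obtain ⟨M, hM⟩ :=
    exists_forall_dyadicAffineOn_dyadicCell hlift.map_add_int ht.monotone ht0 ht1 hbreak haffine
  obtain ⟨N, hN⟩ := eventually_atTop.1 (eventually_two_pow_dvd_addOrderOf hinj hdyadic M)
  have horbit (n : ℕ) : (F^[n] (F^[N] 0) : UnitAddCircle) = f^[n + N] 0 := by
    rw [← Function.iterate_add_apply, ← hlift.iterate_coe, AddCircle.coe_zero]
  obtain ⟨n, hn, z, p, hz⟩ := exists_iterate_eq_add_int
    (hmono.monotone.continuous_of_surjective hlift.surjective) hM
    (fun n ↦ horbit n ▸ (hdyadic (n + N)).isOfFinAddOrder)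
    (fun n ↦ horbit n ▸ hN (n + N) (Nat.le_add_left N n))
  refine hnonper z n hn ?_
  rw [hlift.iterate_coe, coe_unitAddCircle_eq_iff]
  exact ⟨p, hz⟩
end

section
/- Every element of Thompson's group T has rational rotation number: for every f in T and every lift F : ℝ → ℝ of f (a continuous monotone map with F(x+1) = F(x)+1 covering f), the translation number τ(F) = lim_{n→∞} F^n(x)/n is a rational number. -/
open Set

/-!
Suppose a lift `F` of an element of `T` has irrational translation number `α`, and let `x j`,
`j ∈ ℤ`, be the orbit of `0`. The points `x j` are dyadic and distinct modulo `1`, so the exponents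
`w j` of their denominators tend to infinity as `|j| → ∞`. On the other hand, an affine
map of slope `2 ^ k` lowers the exponent of a large denominator by exactly `k`, so
`w (j + 1) - w j` is minus the logarithm of the slope of `F` at `x j`, up to finitely many `j`.
Now Denjoy's argument applies: if `n` is the denominator of a best approximation `q / n` of `α`,
then the arcs with endpoints `x (j - n) + q` and `x j`, `0 ≤ j < n`, are disjoint modulo `1`,
so that the logarithm of the slope takes different values at the two endpoints of at most as many
of them as `F` has breakpoints. Hence `w n - w 0` and `w 0 - w (-n)` differ by a bounded amount,
that is, `w n + w (-n)` is bounded along the best approximations, a contradiction.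

Nothing is special about the prime `2`: the slopes may be powers of any `p ≠ 0`, with breakpoints
in `ℤ[1/p]`.
-/

lemma exists_eq_add_int_of_coe_addCircle_eq {a b : ℝ}
    (hab : (a : AddCircle (1 : ℝ)) = (b : AddCircle (1 : ℝ))) : ∃ n : ℤ, a = b + n := by
  obtain ⟨n, hn⟩ := (AddCircle.coe_eq_zero_iff (1 : ℝ)).1
    (by rw [AddCircle.coe_sub, hab, sub_self] : ((a - b : ℝ) : AddCircle (1 : ℝ)) = 0)
  rw [zsmul_one] at hn
  exact ⟨n, by rw [hn, add_sub_cancel]⟩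

section Orbit

variable {X : Type*} {F : X → X}

lemma exists_orbit (hF : Function.Bijective F) (y : X) :
    ∃ x : ℤ → X, x 0 = y ∧ ∀ j, F (x j) = x (j + 1) := by
  refine ⟨fun j => (Equiv.ofBijective F hF ^ j) y, by simp, fun j => ?_⟩
  simp only [add_comm j, zpow_add, zpow_one, Equiv.Perm.mul_apply, Equiv.ofBijective_apply]

lemma forall_orbit_of_map_iff {Q : X → Prop} (hF : ∀ y, Q (F y) ↔ Q y) {x : ℤ → X}
    (hx : ∀ j, F (x j) = x (j + 1)) (hx0 : Q (x 0)) (j : ℤ) : Q (x j) := by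
  induction j using Int.induction_on with
  | zero => exact hx0
  | succ j ih => rwa [← hx, hF]
  | pred j ih => rwa [← hF, hx, sub_add_cancel]

end Orbit

section ClosestReturn

/-- `n` is a closest return time to `0` of the rotation by `α`: the number `n * α` is strictly
closer to the integer `q` than any `k * α` with `0 < k < n` is to any integer. Equivalently, `q / n`
is a best approximation of the second kind. -/
def IsClosestReturn (α : ℝ) (n : ℕ) (q : ℤ) : Prop :=
  ∀ k : ℕ, 0 < k → k < n → ∀ m : ℤ, |n * α - q| < |k * α - m|

lemma exists_abs_mul_sub_round_lt (α : ℝ) {ε : ℝ} (hε : 0 < ε) :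
    ∃ n : ℕ, 0 < n ∧ |n * α - round (n * α)| < ε := by
  obtain ⟨m, hm⟩ := exists_nat_one_div_lt hε
  obtain ⟨n, hn, -, hnm⟩ := Real.exists_nat_abs_mul_sub_round_le α m.succ_pos
  refine ⟨n, hn, hnm.trans_lt (lt_of_le_of_lt ?_ hm)⟩
  push_cast
  gcongr
  linarith

lemma exists_isClosestReturn {α : ℝ} (hα : Irrational α) (M : ℕ) :
    ∃ n : ℕ, M < n ∧ ∃ q : ℤ, IsClosestReturn α n q := by
  obtain ⟨l, hl, hmin⟩ := (Finset.Icc 1 (M + 1)).exists_min_image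
    (fun k : ℕ => |k * α - round (k * α)|) ⟨1, by simp⟩
  have hpos : 0 < |l * α - round (l * α)| :=
    abs_pos.2 <| sub_ne_zero.2 <|
      (hα.natCast_mul (Nat.one_le_iff_ne_zero.1 (Finset.mem_Icc.1 hl).1)).ne_int _
  have hex := exists_abs_mul_sub_round_lt α hpos
  classical
  obtain ⟨hn, hlt⟩ := Nat.find_spec hex
  refine ⟨Nat.find hex, ?_, round (Nat.find hex * α), fun k hk hkn m => ?_⟩
  · by_contra! hle
    exact (hmin _ (Finset.mem_Icc.2 ⟨hn, hle.trans M.le_succ⟩)).not_gt hlt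
  · have hk_far : ¬ |k * α - round (k * α)| < |l * α - round (l * α)| :=
      fun h => Nat.find_min hex hkn ⟨hk, h⟩
    exact hlt.trans_le ((not_lt.1 hk_far).trans (round_le _ _))

end ClosestReturn

section PeriodicStep

variable {A B : Type*}

/-- `φ` is a `1`-periodic step function with breakpoints in `P + ℤ`: it takes the same value at the
endpoints of every closed interval that misses `P + ℤ`. -/
structure IsPeriodicStep (φ : ℝ → A) (P : Finset ℝ) : Prop where
  periodic : Function.Periodic φ 1
  exists_break : ∀ {a b : ℝ}, φ a ≠ φ b → ∃ t ∈ P, ∃ m : ℤ, t + m ∈ uIcc a b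

lemma IsPeriodicStep.comp {φ : ℝ → A} {P : Finset ℝ} (hφ : IsPeriodicStep φ P) (g : A → B) :
    IsPeriodicStep (g ∘ φ) P where
  periodic := hφ.periodic.comp g
  exists_break hab := hφ.exists_break fun h => hab (congrArg g h)

lemma IsPeriodicStep.map_add_int {φ : ℝ → A} {P : Finset ℝ} (hφ : IsPeriodicStep φ P) (y : ℝ)
    (m : ℤ) : φ (y + m) = φ y := by
  simpa using hφ.periodic.int_mul m y

end PeriodicStep

section Partition

variable {m : ℕ} {t : Fin (m + 1) → ℝ} {y : ℝ}

lemma exists_mem_Ico_castSucc_succ (hy : y ∈ Ico (t 0) (t (Fin.last m))) :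
    ∃ i : Fin m, y ∈ Ico (t i.castSucc) (t i.succ) := by
  have exists_of_lt (i : Fin (m + 1)) :
      y < t i → ∃ i : Fin m, y ∈ Ico (t i.castSucc) (t i.succ) := by
    induction i using Fin.induction with
    | zero => exact fun h => absurd h hy.1.not_gt
    | succ i ih => exact fun h => (lt_or_ge y (t i.castSucc)).elim ih fun h' => ⟨i, h', h⟩
  exact exists_of_lt _ hy.2

lemma eq_of_mem_Ico_castSucc_succ (ht : StrictMono t) {i j : Fin m}
    (hi : y ∈ Ico (t i.castSucc) (t i.succ)) (hj : y ∈ Ico (t j.castSucc) (t j.succ)) : i = j :=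
  le_antisymm (Fin.castSucc_lt_succ_iff.1 (ht.lt_iff_lt.1 (hi.1.trans_lt hj.2)))
    (Fin.castSucc_lt_succ_iff.1 (ht.lt_iff_lt.1 (hj.1.trans_lt hi.2)))

lemma exists_isPeriodicStep_fract_mem_Ico (ht : StrictMono t) (ht0 : t 0 = 0)
    (ht1 : t (Fin.last m) = 1) :
    ∃ piece : ℝ → Fin m, IsPeriodicStep piece (Finset.univ.image t) ∧
      ∀ y, Int.fract y ∈ Ico (t (piece y).castSucc) (t (piece y).succ) := by
  have exists_piece (y : ℝ) : ∃ i : Fin m, Int.fract y ∈ Ico (t i.castSucc) (t i.succ) :=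
    exists_mem_Ico_castSucc_succ (by simp [ht0, ht1, Int.fract_lt_one])
  choose piece hpiece using exists_piece
  have piece_eq {a b : ℝ} (hab : a ≤ b)
      (hno : ∀ s ∈ Finset.univ.image t, ∀ k : ℤ, s + k ∉ Icc a b) : piece a = piece b := by
    obtain ⟨hla, har⟩ := hpiece a
    rw [Int.fract] at hla har
    have hb : b < t (piece a).succ + ⌊a⌋ := by
      by_contra! h
      exact hno _ (Finset.mem_image_of_mem t (Finset.mem_univ _)) _ ⟨by linarith, h⟩
    have ht_le : t (piece a).succ ≤ 1 := ht1 ▸ ht.monotone (Fin.le_last _)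
    have hfloor : ⌊b⌋ = ⌊a⌋ :=
      Int.floor_eq_iff.2 ⟨(Int.floor_le a).trans hab, by linarith⟩
    refine eq_of_mem_Ico_castSucc_succ ht ?_ (hpiece b)
    rw [Int.fract, hfloor]
    exact ⟨by linarith, by linarith⟩
  refine ⟨piece, ⟨fun y => ?_, fun {a b} hne => ?_⟩, hpiece⟩
  · exact eq_of_mem_Ico_castSucc_succ ht (by simpa using hpiece (y + 1)) (hpiece y)
  · by_contra! hno
    rcases le_total a b with hab | hba
    · exact hne (piece_eq hab (by simpa only [uIcc_of_le hab] using hno))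
    · exact hne (piece_eq hba (by simpa only [uIcc_of_ge hba] using hno)).symm

end Partition

section RotationLikeOrbit

variable {α : ℝ} {h : CircleDeg1Lift} {x : ℤ → ℝ}

-- Poincaré: a circle homeomorphism is semiconjugate to the rotation with the same rotation number.
lemma exists_map_orbit_eq_add_mul {F : CircleDeg1Lift} (hF : Function.Bijective F)
    (hx : ∀ j, F (x j) = x (j + 1)) :
    ∃ h : CircleDeg1Lift, ∀ j, h (x j) = h (x 0) + j * F.translationNumber := by
  obtain ⟨u, rfl⟩ := CircleDeg1Lift.isUnit_iff_bijective.2 hF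
  set α := (u : CircleDeg1Lift).translationNumber
  obtain ⟨h, hsemi⟩ := CircleDeg1Lift.units_semiconj_of_translationNumber_eq
    (CircleDeg1Lift.translationNumber_translate α).symm
  have h_succ (j : ℤ) : h (x (j + 1)) = α + h (x j) := by
    rw [← hx, hsemi, CircleDeg1Lift.translate_apply]
  refine ⟨h, fun j => ?_⟩
  induction j using Int.induction_on with
  | zero => simp
  | succ j ih => rw [h_succ, ih]; push_cast; ring
  | pred j ih =>
    have := h_succ (-j - 1)
    rw [sub_add_cancel, ih] at this
    push_cast at this ⊢
    linarith

lemma injective_coe_addCircle_of_irrational (hα : Irrational α)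
    (hx : ∀ j, h (x j) = h (x 0) + j * α) :
    Function.Injective fun j => (x j : AddCircle (1 : ℝ)) := by
  intro i j hij
  obtain ⟨m, hm⟩ := exists_eq_add_int_of_coe_addCircle_eq hij
  have hmα : ((i - j : ℤ) : ℝ) * α = m := by
    have := congrArg h hm
    rw [h.map_add_int, hx, hx j] at this
    push_cast
    linarith
  by_contra hne
  exact (hα.intCast_mul (sub_ne_zero.2 hne)).ne_int m hmα

lemma eq_of_mem_closestReturn_arcs {n : ℕ} {q : ℤ} (hx : ∀ j, h (x j) = h (x 0) + j * α)
    (hn : IsClosestReturn α n q) {i j : ℕ} (hi : i < n) (hj : j < n) {y : ℝ} {m : ℤ}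
    (hyi : y ∈ uIcc (x (i - n) + q) (x i)) (hyj : y + m ∈ uIcc (x (j - n) + q) (x j)) : i = j := by
  have mem_image {k : ℕ} {z : ℝ} (hz : z ∈ uIcc (x (k - n) + q) (x k)) :
      h z - h (x 0) - k * α ∈ uIcc (-(n * α - q)) 0 := by
    have := h.monotone.mapsTo_uIcc hz
    rw [h.map_add_int, hx, hx k] at this
    push_cast at this
    rw [mem_uIcc] at this ⊢
    rcases this with ⟨_, _⟩ | ⟨_, _⟩
    · exact Or.inl ⟨by linarith, by linarith⟩
    · exact Or.inr ⟨by linarith, by linarith⟩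
  have hi_mem := mem_image hyi
  have hj_mem := mem_image hyj
  rw [h.map_add_int] at hj_mem
  have dist_le : |(i - j : ℝ) * α + m| ≤ |n * α - q| := by
    have := abs_sub_le_of_uIcc_subset_uIcc (uIcc_subset_uIcc hi_mem hj_mem)
    rw [zero_sub, neg_neg] at this
    exact this.trans_eq' (congrArg _ (by ring))
  rcases lt_trichotomy i j with hij | hij | hij
  · refine absurd (hn (j - i) (Nat.sub_pos_of_lt hij) (by lia) m) (not_lt.2 ?_)
    rw [Nat.cast_sub hij.le, ← abs_neg]
    exact dist_le.trans_eq' (congrArg _ (by ring))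
  · exact hij
  · refine absurd (hn (i - j) (Nat.sub_pos_of_lt hij) (by lia) (-m)) (not_lt.2 ?_)
    rw [Nat.cast_sub hij.le]
    exact dist_le.trans_eq' (congrArg _ (by push_cast; ring))

lemma IsPeriodicStep.card_filter_ne_le {A : Type*} [DecidableEq A] {φ : ℝ → A} {P : Finset ℝ}
    {n : ℕ} {q : ℤ} (hφ : IsPeriodicStep φ P) (hx : ∀ j, h (x j) = h (x 0) + j * α)
    (hn : IsClosestReturn α n q) :
    ((Finset.range n).filter fun j : ℕ => φ (x j) ≠ φ (x (j - n))).card ≤ P.card := by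
  refine Finset.card_le_card_of_forall_subsingleton
    (fun (j : ℕ) (t : ℝ) => ∃ m : ℤ, t + m ∈ uIcc (x (j - n) + q) (x j))
    (fun j hj => ?_) fun t _ => ?_
  · refine hφ.exists_break ?_
    rw [hφ.map_add_int]
    exact (Finset.mem_filter.1 hj).2.symm
  · rintro i ⟨hi, k, hk⟩ j ⟨hj, l, hl⟩
    simp only [Finset.mem_filter, Finset.mem_range] at hi hj
    refine eq_of_mem_closestReturn_arcs hx hn hi.1 hj.1 (m := l - k) hk ?_
    convert hl using 1
    push_cast
    ring

-- A form of the Denjoy–Koksma inequality.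
lemma IsPeriodicStep.abs_sum_sub_le {R : Type*} [AddCommGroup R] [LinearOrder R]
    [IsOrderedAddMonoid R] {φ : ℝ → R} {P : Finset ℝ} {n : ℕ} {q : ℤ} (hφ : IsPeriodicStep φ P)
    {K : R} (hK : ∀ y, |φ y| ≤ K) (hx : ∀ j, h (x j) = h (x 0) + j * α)
    (hn : IsClosestReturn α n q) :
    |∑ j ∈ Finset.range n, (φ (x j) - φ (x (j - n)))| ≤ P.card • (K + K) := by
  have hK0 : 0 ≤ K := (abs_nonneg _).trans (hK 0)
  rw [← Finset.sum_filter_ne_zero]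
  simp only [sub_ne_zero]
  calc _ ≤ ∑ j ∈ (Finset.range n).filter fun j : ℕ => φ (x j) ≠ φ (x (j - n)),
          |φ (x j) - φ (x (j - n))| :=
        Finset.abs_sum_le_sum_abs _ _
    _ ≤ _ • (K + K) := Finset.sum_le_card_nsmul _ _ _ fun j _ =>
        (abs_sub _ _).trans (add_le_add (hK _) (hK _))
    _ ≤ P.card • (K + K) :=
        nsmul_le_nsmul_left (add_nonneg hK0 hK0) (hφ.card_filter_ne_le hx hn)

lemma exists_forall_sum_range_abs_sub_le {e : ℤ → ℤ} (he : e.support.Finite) :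
    ∃ E, ∀ (n : ℕ) (i : ℤ), ∑ j ∈ Finset.range n, |e (j - i)| ≤ E := by
  refine ⟨∑' j, |e j|, fun n i => ?_⟩
  have hsummable : Summable fun j => |e j| :=
    summable_of_hasFiniteSupport (by simpa [Function.HasFiniteSupport, Function.support] using he)
  let shift : ℕ ↪ ℤ := ⟨fun j => j - i, fun j k hjk => by simpa using hjk⟩
  calc ∑ j ∈ Finset.range n, |e (j - i)| = ∑ j ∈ (Finset.range n).map shift, |e j| := by
        rw [Finset.sum_map]; rfl
    _ ≤ ∑' j, |e j| := hsummable.sum_le_tsum _ fun _ _ => abs_nonneg _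

lemma sum_range_sub_shift {G : Type*} [AddCommGroup G] (w : ℤ → G) (n : ℕ) (i : ℤ) :
    ∑ j ∈ Finset.range n, (w (j - i + 1) - w (j - i)) = w (n - i) - w (-i) := by
  have := Finset.sum_range_sub (fun j : ℕ => w (j - i)) n
  simpa only [Nat.cast_add, Nat.cast_one, Nat.cast_zero, zero_sub, add_sub_right_comm] using this

lemma exists_add_neg_le_of_isClosestReturn {w : ℤ → ℤ} {φ : ℝ → ℤ} {P : Finset ℝ} {K : ℤ}
    (hφ : IsPeriodicStep φ P) (hK : ∀ y, |φ y| ≤ K) (hx : ∀ j, h (x j) = h (x 0) + j * α)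
    (hw : (Function.support fun j => w (j + 1) - w j + φ (x j)).Finite) :
    ∃ C, ∀ (n : ℕ) (q : ℤ), IsClosestReturn α n q → w n + w (-n) ≤ C := by
  set e : ℤ → ℤ := fun j => w (j + 1) - w j + φ (x j) with he
  obtain ⟨E, hE⟩ := exists_forall_sum_range_abs_sub_le hw
  refine ⟨2 * w 0 + (2 * E + P.card • (K + K)), fun n q hn => ?_⟩
  have second_difference : w n + w (-n) - 2 * w 0 = ∑ j ∈ Finset.range n, e (j - 0)
      - ∑ j ∈ Finset.range n, e (j - n) - ∑ j ∈ Finset.range n, (φ (x j) - φ (x (j - n))) := by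
    have forward := sum_range_sub_shift w n 0
    have backward := sum_range_sub_shift w n n
    simp only [he, Finset.sum_add_distrib, forward, backward, Finset.sum_sub_distrib (fun _ => φ _)]
    simp only [sub_zero, sub_self, neg_zero]
    ring
  have abs_sum_le (i : ℤ) : |∑ j ∈ Finset.range n, e (j - i)| ≤ E :=
    (Finset.abs_sum_le_sum_abs _ _).trans (hE n i)
  have forward_le := abs_le.1 (abs_sum_le 0)
  have backward_le := abs_le.1 (abs_sum_le n)
  have step_le := abs_le.1 (hφ.abs_sum_sub_le hK hx hn)
  linarith

end RotationLikeOrbit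

section Adic

variable {p : ℕ} {a b : ℕ} {k : ℤ} {y z : ℝ}

/-- The group `p⁻ᵇℤ` of rationals with denominator dividing `p ^ b`. -/
noncomputable def adicGrid (p b : ℕ) : AddSubgroup ℝ := AddSubgroup.zmultiples ((p : ℝ) ^ b)⁻¹

/-- `y` belongs to `ℤ[1/p]`. -/
def IsAdicRational (p : ℕ) (y : ℝ) : Prop := ∃ b, y ∈ adicGrid p b

/-- The least `b` such that `y` belongs to `p⁻ᵇℤ`, with value `0` if `y` is not in `ℤ[1/p]`. -/
noncomputable def adicLevel (p : ℕ) (y : ℝ) : ℕ := sInf {b | y ∈ adicGrid p b}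

lemma IsAdicRational.mem_adicGrid_adicLevel (hy : IsAdicRational p y) :
    y ∈ adicGrid p (adicLevel p y) :=
  Nat.sInf_mem (s := {b | y ∈ adicGrid p b}) hy

lemma adicLevel_le (hy : y ∈ adicGrid p b) : adicLevel p y ≤ b := Nat.sInf_le hy

lemma isAdicRational_two_iff_isDyadic : IsAdicRational 2 y ↔ IsDyadic y := by
  simp only [IsAdicRational, adicGrid, IsDyadic, AddSubgroup.mem_zmultiples_iff, zsmul_eq_mul,
    div_eq_mul_inv, Nat.cast_ofNat, eq_comm (a := y)]
  exact exists_comm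

variable [NeZero p]

lemma zpow_mul_mem_adicGrid (hab : (a : ℤ) ≤ b + k) (hy : y ∈ adicGrid p a) :
    (p : ℝ) ^ k * y ∈ adicGrid p b := by
  have hp : (p : ℝ) ≠ 0 := NeZero.ne _
  obtain ⟨c, rfl⟩ := hy
  obtain ⟨d, hd⟩ := Int.eq_ofNat_of_zero_le (sub_nonneg.2 hab)
  have hpow : (p : ℝ) ^ k = p ^ d * p ^ a * ((p : ℝ) ^ b)⁻¹ := by
    rw [← zpow_natCast, ← zpow_natCast, ← zpow_natCast, ← zpow_neg, ← zpow_add₀ hp, ← zpow_add₀ hp]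
    congr 1
    lia
  refine ⟨c * p ^ d, ?_⟩
  simp only [zsmul_eq_mul, hpow]
  push_cast
  field_simp

lemma adicGrid_mono (hab : a ≤ b) : adicGrid p a ≤ adicGrid p b := fun y hy => by
  simpa using zpow_mul_mem_adicGrid (k := 0) (b := b) (by lia) hy

lemma intCast_mem_adicGrid (c : ℤ) : (c : ℝ) ∈ adicGrid p b :=
  adicGrid_mono b.zero_le ⟨c, by simp⟩

lemma left_mem_adicGrid_of_sub_zpow_mul_mem (ha : y ∈ adicGrid p a)
    (hz : z - (p : ℝ) ^ k * y ∈ adicGrid p b) (hab : (a : ℤ) ≤ b + k) : z ∈ adicGrid p b :=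
  (sub_add_cancel z _) ▸ add_mem hz (zpow_mul_mem_adicGrid hab ha)

lemma right_mem_adicGrid_of_sub_zpow_mul_mem (hb : z ∈ adicGrid p b)
    (hz : z - (p : ℝ) ^ k * y ∈ adicGrid p b) (hba : b + k ≤ (a : ℤ)) : y ∈ adicGrid p a := by
  have hp : (p : ℝ) ≠ 0 := NeZero.ne _
  have hky : (p : ℝ) ^ k * y ∈ adicGrid p b := by
    simpa only [sub_sub_cancel] using sub_mem hb hz
  simpa only [← mul_assoc, ← zpow_add₀ hp, neg_add_cancel, zpow_zero, one_mul] using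
    zpow_mul_mem_adicGrid (k := -k) (b := a) (by lia) hky

lemma isAdicRational_iff_of_sub_zpow_mul_mem (hz : z - (p : ℝ) ^ k * y ∈ adicGrid p b) :
    IsAdicRational p z ↔ IsAdicRational p y := by
  constructor
  · rintro ⟨a, ha⟩
    exact ⟨max a b + k.natAbs, right_mem_adicGrid_of_sub_zpow_mul_mem
      (adicGrid_mono (le_max_left a b) ha) (adicGrid_mono (le_max_right a b) hz) (by lia)⟩
  · rintro ⟨a, ha⟩
    exact ⟨a + b + k.natAbs, left_mem_adicGrid_of_sub_zpow_mul_mem ha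
      (adicGrid_mono (by lia) hz) (by lia)⟩

lemma adicLevel_eq_sub_of_sub_zpow_mul_mem (hy : IsAdicRational p y) (hz : IsAdicRational p z)
    (hyz : z - (p : ℝ) ^ k * y ∈ adicGrid p b) (hby : b < adicLevel p y) (hbz : b < adicLevel p z) :
    (adicLevel p z : ℤ) = adicLevel p y - k := by
  have z_le : adicLevel p z ≤ max (adicLevel p y - k).toNat b :=
    adicLevel_le <| left_mem_adicGrid_of_sub_zpow_mul_mem hy.mem_adicGrid_adicLevel
      (adicGrid_mono (by lia) hyz) (by lia)
  have y_le : adicLevel p y ≤ (adicLevel p z + k).toNat :=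
    adicLevel_le <| right_mem_adicGrid_of_sub_zpow_mul_mem hz.mem_adicGrid_adicLevel
      (adicGrid_mono hbz.le hyz) (by lia)
  lia

lemma finite_setOf_mem_adicGrid {ι : Type*} {x : ι → ℝ}
    (hx : Function.Injective fun j => (x j : AddCircle (1 : ℝ))) (b : ℕ) :
    {j | x j ∈ adicGrid p b}.Finite := by
  have hpb : 0 < p ^ b := pow_pos (NeZero.pos p) b
  refine ((AddCircle.finite_torsion (1 : ℝ) hpb).preimage hx.injOn).subset fun j hj => ?_
  obtain ⟨c, hc⟩ := hj
  have hpow : (p : ℝ) ^ b ≠ 0 := by exact_mod_cast hpb.ne'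
  refine (AddCircle.coe_eq_zero_iff (1 : ℝ)).2 ⟨c, ?_⟩
  simp only [← hc, zsmul_eq_mul, nsmul_eq_mul]
  push_cast
  field_simp

lemma finite_setOf_adicLevel_le {ι : Type*} {x : ι → ℝ}
    (hx : Function.Injective fun j => (x j : AddCircle (1 : ℝ)))
    (hadic : ∀ j, IsAdicRational p (x j)) (b : ℕ) : {j | adicLevel p (x j) ≤ b}.Finite :=
  (finite_setOf_mem_adicGrid hx b).subset fun j hj =>
    adicGrid_mono hj (hadic j).mem_adicGrid_adicLevel

end Adic

section AdicPiecewiseAffine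

variable {p : ℕ}

/-- `F` is affine on each piece of a finite partition `0 = t 0 < ⋯ < t m = 1` of the unit interval,
with slopes powers of `p` and breakpoints `(t i, F (t i))` with coordinates in `ℤ[1/p]`. -/
def IsAdicPiecewiseAffine (p : ℕ) (F : ℝ → ℝ) : Prop :=
  ∃ m : ℕ, ∃ t : Fin (m + 1) → ℝ, StrictMono t ∧ t 0 = 0 ∧ t (Fin.last m) = 1 ∧
    (∀ i, IsAdicRational p (t i) ∧ IsAdicRational p (F (t i))) ∧
    ∀ i : Fin m, ∃ k : ℤ, ∃ c : ℝ,
      ∀ x ∈ Icc (t i.castSucc) (t i.succ), F x = (p : ℝ) ^ k * x + c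

variable [NeZero p]

lemma exists_forall_add_int_sub_mem_adicGrid {c : ℝ} (hc : IsAdicRational p c) (k : ℤ) :
    ∃ b, ∀ n : ℤ, c + (n - (p : ℝ) ^ k * n) ∈ adicGrid p b := by
  obtain ⟨a, ha⟩ := hc
  exact ⟨a + k.natAbs, fun n => add_mem (adicGrid_mono (by lia) ha) <|
    sub_mem (intCast_mem_adicGrid n)
      (zpow_mul_mem_adicGrid (by lia) (intCast_mem_adicGrid (b := 0) n))⟩

lemma IsAdicPiecewiseAffine.exists_isPeriodicStep {F : CircleDeg1Lift}
    (hF : IsAdicPiecewiseAffine p F) :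
    ∃ (κ : ℝ → ℤ) (P : Finset ℝ) (K : ℤ) (b : ℕ), IsPeriodicStep κ P ∧ (∀ y, |κ y| ≤ K) ∧
      ∀ y, F y - (p : ℝ) ^ κ y * y ∈ adicGrid p b := by
  obtain ⟨m, t, ht, ht0, ht1, hadic, haffine⟩ := hF
  choose k c hkc using haffine
  have intercept_isAdic (i : Fin m) : IsAdicRational p (c i) := by
    obtain ⟨ht_adic, b, hFt⟩ := hadic i.castSucc
    have hct : c i - (p : ℝ) ^ (k i) * -t i.castSucc ∈ adicGrid p b := by
      rw [hkc i _ (left_mem_Icc.2 (ht i.castSucc_lt_succ).le)] at hFt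
      simpa [add_comm] using hFt
    exact (isAdicRational_iff_of_sub_zpow_mul_mem hct).2 (ht_adic.imp fun _ => neg_mem)
  choose b hb using fun i => exists_forall_add_int_sub_mem_adicGrid (intercept_isAdic i) (k i)
  obtain ⟨B, hB⟩ := Finite.exists_le b
  obtain ⟨K, hK⟩ := Finite.exists_le fun i => |k i|
  obtain ⟨piece, hstep, hpiece⟩ := exists_isPeriodicStep_fract_mem_Ico ht ht0 ht1
  refine ⟨k ∘ piece, _, K, B, hstep.comp k, fun y => hK _, fun y => ?_⟩
  have F_fract := hkc (piece y) _ (Ico_subset_Icc_self (hpiece y))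
  rw [Int.fract, F.map_sub_int] at F_fract
  have intercept_eq : F y - (p : ℝ) ^ k (piece y) * y
      = c (piece y) + (⌊y⌋ - (p : ℝ) ^ k (piece y) * ⌊y⌋) := by
    linear_combination F_fract
  exact intercept_eq ▸ adicGrid_mono (hB _) (hb _ _)

lemma finite_support_adicLevel_sub_add {F : ℝ → ℝ} {κ : ℝ → ℤ} {b : ℕ} {x : ℤ → ℝ}
    (hF : ∀ y, F y - (p : ℝ) ^ κ y * y ∈ adicGrid p b) (hx : ∀ j, F (x j) = x (j + 1))
    (hinj : Function.Injective fun j => (x j : AddCircle (1 : ℝ)))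
    (hadic : ∀ j, IsAdicRational p (x j)) :
    (Function.support fun j =>
      (adicLevel p (x (j + 1)) - adicLevel p (x j) + κ (x j) : ℤ)).Finite := by
  have hfin := finite_setOf_adicLevel_le hinj hadic b
  refine (hfin.union (hfin.preimage (add_left_injective 1).injOn)).subset fun j hj => ?_
  by_contra hlarge
  simp only [mem_union, mem_preimage, mem_ofPred_eq, not_or, not_le] at hlarge
  have := adicLevel_eq_sub_of_sub_zpow_mul_mem (hadic j) (hadic (j + 1)) (hx j ▸ hF (x j))
    hlarge.1 hlarge.2
  exact hj (by simp only; lia)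

theorem thompsonT_rotation_number_rational_general {F : CircleDeg1Lift}
    (hbij : Function.Bijective F) (hF : IsAdicPiecewiseAffine p F) :
    ∃ q : ℚ, F.translationNumber = q := by
  obtain ⟨κ, P, K, b, hκ, hK, hslope⟩ := hF.exists_isPeriodicStep
  obtain ⟨x, hx0, hx⟩ := exists_orbit hbij 0
  obtain ⟨h, hh⟩ := exists_map_orbit_eq_add_mul hbij hx
  have hadic : ∀ j, IsAdicRational p (x j) :=
    forall_orbit_of_map_iff (fun y => isAdicRational_iff_of_sub_zpow_mul_mem (hslope y)) hx
      ⟨0, hx0 ▸ zero_mem _⟩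
  by_contra! hirr
  replace hirr : Irrational F.translationNumber := fun ⟨q, hq⟩ => hirr q hq.symm
  have hinj := injective_coe_addCircle_of_irrational hirr hh
  obtain ⟨C, hC⟩ := exists_add_neg_le_of_isClosestReturn (w := fun j => adicLevel p (x j)) hκ hK hh
    (finite_support_adicLevel_sub_add hslope hx hinj hadic)
  obtain ⟨M, hM⟩ := (finite_setOf_adicLevel_le hinj hadic C.toNat).bddAbove
  obtain ⟨n, hMn, q, hn⟩ := exists_isClosestReturn hirr M.toNat
  have level_le : adicLevel p (x n) ≤ C.toNat := by
    have := hC n q hn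
    lia
  have n_le : (n : ℤ) ≤ M := hM level_le
  lia

end AdicPiecewiseAffine

section Lift

variable {f : AddCircle (1 : ℝ) → AddCircle (1 : ℝ)} {F G : CircleDeg1Lift}

lemma bijective_of_covers (hf : Function.Bijective f)
    (hF : ∀ x : ℝ, f (x : AddCircle (1 : ℝ)) = (F x : AddCircle (1 : ℝ))) :
    Function.Bijective F := by
  constructor
  · intro a b hab
    obtain ⟨n, rfl⟩ := exists_eq_add_int_of_coe_addCircle_eq
      (hf.injective (by rw [hF, hF, hab] : f (a : AddCircle (1 : ℝ)) = f b))
    simpa using hab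
  · intro y
    obtain ⟨z, hz⟩ := hf.surjective (y : AddCircle (1 : ℝ))
    obtain ⟨r, rfl⟩ := QuotientAddGroup.mk_surjective z
    obtain ⟨n, hn⟩ := exists_eq_add_int_of_coe_addCircle_eq ((hF r).symm.trans hz)
    exact ⟨r - n, by rw [F.map_sub_int, hn, add_sub_cancel_right]⟩

lemma exists_forall_eq_add_int (hG : StrictMono G)
    (hFG : ∀ x, (F x : AddCircle (1 : ℝ)) = (G x : AddCircle (1 : ℝ))) :
    ∃ n : ℤ, ∀ x, F x = G x + n := by
  choose d hd using fun x => exists_eq_add_int_of_coe_addCircle_eq (hFG x)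
  have d_fract (x : ℝ) : d (Int.fract x) = d 0 := by
    rcases (Int.fract_nonneg x).eq_or_lt with hx0 | hx0
    · rw [← hx0]
    have hx1 := Int.fract_lt_one x
    have F_one := F.map_add_one 0
    have G_one := G.map_add_one 0
    rw [zero_add] at F_one G_one
    have lower : (d 0 : ℝ) < d (Int.fract x) + 1 := by
      linarith [F.monotone hx0.le, hG hx1, hd 0, hd (Int.fract x)]
    have upper : (d (Int.fract x) : ℝ) < d 0 + 1 := by
      linarith [F.monotone hx1.le, hG hx0, hd 0, hd (Int.fract x)]
    norm_cast at lower upper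
    lia
  refine ⟨d 0, fun x => ?_⟩
  have := hd (Int.fract x)
  rw [d_fract, Int.fract, F.map_sub_int, G.map_sub_int] at this
  linarith

lemma isAdicPiecewiseAffine_add_int {F : ℝ → ℝ} {p : ℕ} [NeZero p]
    (hF : IsAdicPiecewiseAffine p F) (n : ℤ) : IsAdicPiecewiseAffine p fun x => F x + n := by
  obtain ⟨m, t, ht, ht0, ht1, hadic, haffine⟩ := hF
  refine ⟨m, t, ht, ht0, ht1, fun i => ⟨(hadic i).1, ?_⟩, fun i => ?_⟩
  · exact (hadic i).2.imp fun b hb => add_mem hb (intCast_mem_adicGrid n)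
  · obtain ⟨k, c, hkc⟩ := haffine i
    exact ⟨k, c + n, fun x hx => by simp only [hkc x hx, add_assoc]⟩

lemma isAdicPiecewiseAffine_of_inThompsonT {f : AddCircle (1 : ℝ) ≃ₜ AddCircle (1 : ℝ)}
    (hf : InThompsonT f) (hF : ∀ x : ℝ, f (x : AddCircle (1 : ℝ)) = (F x : AddCircle (1 : ℝ))) :
    IsAdicPiecewiseAffine 2 F := by
  obtain ⟨-, G, hG, ⟨hG_add_one, hGf⟩, m, t, ht, ht0, ht1, hdyadic, haffine⟩ := hf
  have hG_affine : IsAdicPiecewiseAffine 2 G :=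
    ⟨m, t, ht, ht0, ht1, by simpa only [isAdicRational_two_iff_isDyadic] using hdyadic,
      by simpa only [Nat.cast_ofNat] using haffine⟩
  obtain ⟨n, hn⟩ := exists_forall_eq_add_int (F := F) (G := ⟨⟨G, hG.monotone⟩, hG_add_one⟩) hG
    fun x => (hF x).symm.trans (hGf x)
  exact funext hn ▸ isAdicPiecewiseAffine_add_int hG_affine n

end Lift

/-- Every element of Thompson's group `T` has rational rotation number: for every
`f ∈ T` and every lift `F : ℝ → ℝ` of `f` (a monotone map with `F (x+1) = F x + 1`
whose reduction modulo 1 is `f`), the translation number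
`τ(F) = lim_{n→∞} Fⁿ(x)/n` is a rational number. -/
theorem thompsonT_rotation_number_rational :
    ∀ f : AddCircle (1:ℝ) ≃ₜ AddCircle (1:ℝ), InThompsonT f →
      ∀ F : CircleDeg1Lift,
        (∀ x : ℝ, f (x : AddCircle (1:ℝ)) = ((F x : ℝ) : AddCircle (1:ℝ))) →
        ∃ q : ℚ, F.translationNumber = (q : ℝ) :=
  fun f hf _F hF => thompsonT_rotation_number_rational_general
    (bijective_of_covers f.bijective hF) (isAdicPiecewiseAffine_of_inThompsonT hf hF)
end

section
/- (Ghys–Sergiescu) Every rational number is realized as a rotation number in Thompson's group T: for every rational q with 0 ≤ q < 1 there exists an element f of T whose rotation number equals q. -/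
open Set

/-!
Cut the circle into `n` arcs with dyadic endpoints whose lengths are powers of `2`, and let `h` be
the piecewise linear homeomorphism that carries the `n` equal arcs `[i / n, (i + 1) / n]` affinely
onto them. Conjugating the rotation by `p / n` with `h` gives a homeomorphism that permutes the
dyadic arcs cyclically and is affine on each of them; its slopes are quotients of powers of `2`, so
it belongs to `T`. Conjugation preserves the translation number, which is therefore `p / n`.
-/

namespace IsDyadic

theorem intCast (z : ℤ) : IsDyadic z := ⟨z, 0, by simp⟩

theorem two_zpow (k : ℤ) : IsDyadic ((2 : ℝ) ^ k) := by
  obtain ⟨m, rfl | rfl⟩ := k.eq_nat_or_neg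
  · exact ⟨2 ^ m, 0, by simp⟩
  · exact ⟨1, m, by simp⟩

variable {x y : ℝ}

theorem add (hx : IsDyadic x) (hy : IsDyadic y) : IsDyadic (x + y) := by
  obtain ⟨a, b, rfl⟩ := hx
  obtain ⟨c, d, rfl⟩ := hy
  refine ⟨a * 2 ^ d + c * 2 ^ b, b + d, ?_⟩
  push_cast
  field_simp
  ring

theorem neg (hx : IsDyadic x) : IsDyadic (-x) := by
  obtain ⟨a, b, rfl⟩ := hx
  exact ⟨-a, b, by push_cast; ring⟩

theorem sub (hx : IsDyadic x) (hy : IsDyadic y) : IsDyadic (x - y) :=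
  sub_eq_add_neg x y ▸ hx.add hy.neg

theorem mul (hx : IsDyadic x) (hy : IsDyadic y) : IsDyadic (x * y) := by
  obtain ⟨a, b, rfl⟩ := hx
  obtain ⟨c, d, rfl⟩ := hy
  exact ⟨a * c, b + d, by push_cast; field_simp; ring⟩

end IsDyadic

section CircleMaps

open CircleDeg1Lift

/-- The self-map of `ℝ/ℤ` induced by a degree one lift. -/
def inducedCircleMap (F : CircleDeg1Lift) : AddCircle (1 : ℝ) → AddCircle (1 : ℝ) :=
  Function.Periodic.lift (f := fun x : ℝ ↦ (F x : AddCircle (1 : ℝ))) (c := 1) fun x ↦ by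
    simp only [F.map_add_one, AddCircle.coe_add_period]

theorem inducedCircleMap_coe (F : CircleDeg1Lift) (x : ℝ) :
    inducedCircleMap F x = (F x : AddCircle (1 : ℝ)) := rfl

theorem continuous_inducedCircleMap {F : CircleDeg1Lift} (hF : Continuous F) :
    Continuous (inducedCircleMap F) :=
  ((AddCircle.continuous_mk' 1).comp hF).quotient_lift _

theorem inducedCircleMap_inv_apply_apply (F : CircleDeg1Liftˣ) (x : AddCircle (1 : ℝ)) :
    inducedCircleMap (F⁻¹ : CircleDeg1Liftˣ) (inducedCircleMap F x) = x := by
  induction x using QuotientAddGroup.induction_on with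
  | H x => rw [inducedCircleMap_coe, inducedCircleMap_coe, units_inv_apply_apply]

/-- The self-homeomorphism of `ℝ/ℤ` induced by an invertible degree one lift. -/
def circleHomeomorph (F : CircleDeg1Liftˣ) : AddCircle (1 : ℝ) ≃ₜ AddCircle (1 : ℝ) where
  toFun := inducedCircleMap F
  invFun := inducedCircleMap (F⁻¹ : CircleDeg1Liftˣ)
  left_inv := inducedCircleMap_inv_apply_apply F
  right_inv := inducedCircleMap_inv_apply_apply F⁻¹
  continuous_toFun := continuous_inducedCircleMap (toOrderIso F).continuous
  continuous_invFun := continuous_inducedCircleMap (toOrderIso F⁻¹).continuous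

theorem circleHomeomorph_coe (F : CircleDeg1Liftˣ) (x : ℝ) :
    circleHomeomorph F x = (F x : AddCircle (1 : ℝ)) := rfl

theorem isDyadicPt_circleHomeomorph_iff {F : CircleDeg1Liftˣ}
    (hF : ∀ x, IsDyadic x → IsDyadic (F x))
    (hF_inv : ∀ x, IsDyadic x → IsDyadic ((F⁻¹ : CircleDeg1Liftˣ) x)) (x : AddCircle (1 : ℝ)) :
    IsDyadicPt x ↔ IsDyadicPt (circleHomeomorph F x) := by
  constructor
  · rintro ⟨r, hr, rfl⟩
    exact ⟨F r, hF r hr, rfl⟩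
  · rintro ⟨r, hr, hrx⟩
    refine ⟨(F⁻¹ : CircleDeg1Liftˣ) r, hF_inv r hr, ?_⟩
    rw [← (circleHomeomorph F).symm_apply_apply x, ← hrx]
    rfl

variable {F G : CircleDeg1Lift}

theorem exists_eq_add_int_of_coe_eq (hG : StrictMono G)
    (hFG : ∀ x, (F x : AddCircle (1 : ℝ)) = G x) : ∃ k : ℤ, ∀ x, F x = G x + k := by
  have exists_int (x : ℝ) : ∃ k : ℤ, F x = G x + k := by
    obtain ⟨k, hk⟩ := AddCircle.coe_eq_zero_iff 1 |>.1 <|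
      (AddCircle.coe_sub 1 (F x) (G x)).trans (sub_eq_zero.2 (hFG x))
    exact ⟨k, by simp only [zsmul_eq_mul, mul_one] at hk; linarith⟩
  choose d hd using exists_int
  -- Between `0` and a point of `(0, 1)`, the increment of `F` lies in `[0, 1]` and that of `G` in
  -- `(0, 1)`, so the integer `d` changes by less than `1`.
  have d_fract (x : ℝ) : d (Int.fract x) = d 0 := by
    rcases (Int.fract_nonneg x).eq_or_lt with h | h
    · rw [← h]
    · have hF₀ := F.monotone h.le
      have hF₁ := F.monotone (Int.fract_lt_one x).le
      have hG₀ := hG h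
      have hG₁ := hG (Int.fract_lt_one x)
      rw [← zero_add (1 : ℝ), map_add_one] at hF₁ hG₁
      have upper : (d (Int.fract x) : ℝ) < d 0 + 1 := by linarith [hd 0, hd (Int.fract x)]
      have lower : (d 0 : ℝ) < d (Int.fract x) + 1 := by linarith [hd 0, hd (Int.fract x)]
      norm_cast at upper lower
      lia
  refine ⟨d 0, fun x ↦ ?_⟩
  rw [← d_fract x]
  linarith [hd (Int.fract x), F.map_fract_sub_fract_eq x, G.map_fract_sub_fract_eq x]

theorem exists_translationNumber_eq_add_int (hG : StrictMono G)
    (hFG : ∀ x, (F x : AddCircle (1 : ℝ)) = G x) :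
    ∃ k : ℤ, F.translationNumber = G.translationNumber + k := by
  obtain ⟨k, hk⟩ := exists_eq_add_int_of_coe_eq hG hFG
  have hF : F = G * translate (Multiplicative.ofAdd (k : ℝ)) := by
    ext x
    rw [mul_apply, translate_apply, map_int_add, hk, add_comm]
  have hcomm : Commute G (translate (Multiplicative.ofAdd (k : ℝ))) :=
    commute_iff_commute.2 (G.commute_int_add k)
  exact ⟨k, by rw [hF, translationNumber_mul_of_commute hcomm, translationNumber_translate]⟩

end CircleMaps

section PiecewiseLinear

open AffineMap

/-- The piecewise linear interpolation of a sequence `t : ℤ → ℝ`, with value `t i` at `i`. -/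
noncomputable def piecewiseLinear (t : ℤ → ℝ) (y : ℝ) : ℝ :=
  lineMap (t ⌊y⌋) (t (⌊y⌋ + 1)) (Int.fract y)

variable {t : ℤ → ℝ}

theorem piecewiseLinear_intCast_add (i : ℤ) {s : ℝ} (hs : s ∈ Icc (0 : ℝ) 1) :
    piecewiseLinear t (i + s) = lineMap (t i) (t (i + 1)) s := by
  rcases hs.2.eq_or_lt with rfl | hs₁
  · have hcast : (i : ℝ) + 1 = (i + 1 : ℤ) := by push_cast; rfl
    rw [piecewiseLinear, hcast, Int.floor_intCast, Int.fract_intCast, lineMap_apply_zero,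
      lineMap_apply_one]
  · rw [piecewiseLinear, Int.floor_intCast_add, Int.fract_intCast_add,
      Int.floor_eq_zero_iff.2 ⟨hs.1, hs₁⟩, Int.fract_eq_self.2 ⟨hs.1, hs₁⟩, add_zero]

theorem piecewiseLinear_mem_Ico (ht : StrictMono t) (y : ℝ) :
    piecewiseLinear t y ∈ Ico (t ⌊y⌋) (t (⌊y⌋ + 1)) := by
  have hstep : t ⌊y⌋ < t (⌊y⌋ + 1) := ht (lt_add_one _)
  exact ⟨(left_le_lineMap_iff_nonneg hstep).2 (Int.fract_nonneg y),
    (lineMap_lt_right_iff_lt_one hstep).2 (Int.fract_lt_one y)⟩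

theorem strictMono_piecewiseLinear (ht : StrictMono t) : StrictMono (piecewiseLinear t) := by
  intro x y hxy
  rcases (Int.floor_mono hxy.le).eq_or_lt with hfloor | hfloor
  · have hfract : Int.fract x < Int.fract y := by
      rw [Int.fract, Int.fract, hfloor]
      exact sub_lt_sub_right hxy _
    rw [piecewiseLinear, piecewiseLinear, hfloor]
    exact (lineMap_lt_lineMap_iff_of_lt' (ht (lt_add_one _))).2 hfract
  · calc piecewiseLinear t x < t (⌊x⌋ + 1) := (piecewiseLinear_mem_Ico ht x).2
      _ ≤ t ⌊y⌋ := ht.monotone hfloor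
      _ ≤ piecewiseLinear t y := (piecewiseLinear_mem_Ico ht y).1

theorem exists_piecewiseLinear_eq_of_mem_Icc {i : ℤ} (ht : t i ≤ t (i + 1)) {x : ℝ}
    (hx : x ∈ Icc (t i) (t (i + 1))) : ∃ s ∈ Icc (0 : ℝ) 1, piecewiseLinear t (i + s) = x := by
  rw [← segment_eq_Icc ht, segment_eq_image_lineMap] at hx
  obtain ⟨s, hs, rfl⟩ := hx
  exact ⟨s, hs, piecewiseLinear_intCast_add i hs⟩

theorem Ioc_subset_range_piecewiseLinear (ht : Monotone t) (i j : ℤ) :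
    Ioc (t i) (t j) ⊆ range (piecewiseLinear t) := by
  rw [← ht.biUnion_Ico_Ioc_map_succ]
  refine iUnion₂_subset fun k _ x hx ↦ ?_
  obtain ⟨s, -, hs⟩ := exists_piecewiseLinear_eq_of_mem_Icc (ht (Order.le_succ k)) ⟨hx.1.le, hx.2⟩
  exact ⟨k + s, hs⟩

theorem piecewiseLinear_add_intCast {n : ℤ} {c : ℝ} (ht : ∀ i, t (i + n) = t i + c) (y : ℝ) :
    piecewiseLinear t (y + n) = piecewiseLinear t y + c := by
  rw [piecewiseLinear, piecewiseLinear, Int.floor_add_intCast, Int.fract_add_intCast,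
    add_right_comm, ht, ht, lineMap_apply_ring', lineMap_apply_ring']
  ring

end PiecewiseLinear

/-- A subdivision of `ℝ/ℤ` into `n` arcs with dyadic endpoints, one of which is `0`, and with
lengths integer powers of `2`. It is recorded by its lift to `ℝ`: the increasing sequence of all
its endpoints, indexed by `ℤ`. -/
structure DyadicSubdivision (n : ℕ) where
  point : ℤ → ℝ
  point_zero : point 0 = 0
  point_add_natCast : ∀ i, point (i + n) = point i + 1
  exists_point_add_one : ∀ i, ∃ k : ℤ, point (i + 1) = point i + 2 ^ k

namespace DyadicSubdivision

open CircleDeg1Lift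

theorem natCast_ne_zero {n : ℕ} (S : DyadicSubdivision n) : (n : ℝ) ≠ 0 := by
  rw [Nat.cast_ne_zero]
  rintro rfl
  simpa using S.point_add_natCast 0

variable {n : ℕ} (S : DyadicSubdivision n)

theorem strictMono_point : StrictMono S.point :=
  strictMono_int_of_lt_succ fun i ↦ by
    obtain ⟨k, hk⟩ := S.exists_point_add_one i
    rw [hk]
    exact lt_add_of_pos_right _ (by positivity)

theorem isDyadic_point (i : ℤ) : IsDyadic (S.point i) := by
  induction i with
  | zero => simpa only [S.point_zero, Int.cast_zero] using IsDyadic.intCast 0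
  | succ i ih =>
    obtain ⟨k, hk⟩ := S.exists_point_add_one i
    exact hk ▸ ih.add (.two_zpow k)
  | pred i ih =>
    obtain ⟨k, hk⟩ := S.exists_point_add_one (-i - 1)
    rw [sub_add_cancel] at hk
    exact eq_sub_of_add_eq hk.symm ▸ ih.sub (.two_zpow k)

theorem point_mul_natCast (k : ℤ) : S.point (k * n) = k := by
  simpa [S.point_zero] using
    AddConstMapClass.map_zsmul_const (⟨S.point, S.point_add_natCast⟩ : AddConstMap ℤ ℝ n 1) k

theorem surjective_piecewiseLinear_point : Function.Surjective (piecewiseLinear S.point) := by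
  intro x
  refine Ioc_subset_range_piecewiseLinear S.strictMono_point.monotone
    ((⌈x⌉ - 1) * n) (⌈x⌉ * n) ?_
  rw [point_mul_natCast, point_mul_natCast]
  exact ⟨by push_cast; linarith [Int.ceil_lt_add_one x], Int.le_ceil x⟩

/-- The piecewise linear degree one lift carrying the subdivision of `ℝ/ℤ` into `n` equal arcs
onto `S`. -/
noncomputable def equalArcsLift : CircleDeg1Lift where
  toFun y := piecewiseLinear S.point (n * y)
  monotone' _ _ h := (strictMono_piecewiseLinear S.strictMono_point).monotone
    (mul_le_mul_of_nonneg_left h n.cast_nonneg)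
  map_add_one' y := by
    simpa only [mul_add_one, Int.cast_natCast] using
      piecewiseLinear_add_intCast S.point_add_natCast (n * y)

theorem equalArcsLift_div (y : ℝ) : S.equalArcsLift (y / n) = piecewiseLinear S.point y :=
  congrArg (piecewiseLinear S.point) (mul_div_cancel₀ y S.natCast_ne_zero)

theorem isUnit_equalArcsLift : IsUnit S.equalArcsLift := by
  refine isUnit_iff_bijective.2 ⟨?_, fun x ↦ ?_⟩
  · exact (strictMono_piecewiseLinear S.strictMono_point).injective.comp
      (mul_right_injective₀ S.natCast_ne_zero)
  · obtain ⟨y, rfl⟩ := S.surjective_piecewiseLinear_point x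
    exact ⟨y / n, S.equalArcsLift_div y⟩

/-- The lift of a circle homeomorphism that moves every arc of `S` by `p` places: the conjugate of
the translation by `p / n` by `S.equalArcsLift`. -/
noncomputable def rotation (p : ℤ) : CircleDeg1Liftˣ :=
  S.isUnit_equalArcsLift.unit * translate (Multiplicative.ofAdd (p / n : ℝ)) *
    S.isUnit_equalArcsLift.unit⁻¹

theorem translationNumber_rotation (p : ℤ) :
    (S.rotation p : CircleDeg1Lift).translationNumber = p / n := by
  rw [rotation, Units.val_mul, Units.val_mul, translationNumber_conj_eq,
    translationNumber_translate]

theorem rotation_inv (p : ℤ) : (S.rotation p)⁻¹ = S.rotation (-p) := by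
  simp only [rotation, mul_inv_rev, inv_inv, mul_assoc, ← map_inv, ← ofAdd_neg, Int.cast_neg,
    neg_div]

theorem rotation_piecewiseLinear (p : ℤ) (y : ℝ) :
    S.rotation p (piecewiseLinear S.point y) = piecewiseLinear S.point (y + p) := by
  have h_inv : (S.isUnit_equalArcsLift.unit⁻¹ : CircleDeg1Liftˣ) (piecewiseLinear S.point y) =
      y / n := by
    rw [← S.equalArcsLift_div]
    exact units_inv_apply_apply S.isUnit_equalArcsLift.unit (y / n)
  rw [rotation, Units.val_mul, Units.val_mul, mul_apply, mul_apply, h_inv, translate_apply,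
    ← add_div, add_comm (p : ℝ), IsUnit.unit_spec, equalArcsLift_div]

theorem exists_rotation_eq_two_zpow_mul_add (p i : ℤ) :
    ∃ k : ℤ, ∃ c : ℝ, IsDyadic c ∧
      ∀ x ∈ Icc (S.point i) (S.point (i + 1)), S.rotation p x = 2 ^ k * x + c := by
  obtain ⟨k, hk⟩ := S.exists_point_add_one i
  obtain ⟨l, hl⟩ := S.exists_point_add_one (i + p)
  refine ⟨l - k, S.point (i + p) - 2 ^ (l - k) * S.point i,
    (S.isDyadic_point _).sub ((IsDyadic.two_zpow _).mul (S.isDyadic_point _)), fun x hx ↦ ?_⟩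
  obtain ⟨s, hs, rfl⟩ :=
    exists_piecewiseLinear_eq_of_mem_Icc (S.strictMono_point (lt_add_one i)).le hx
  have hshift : (i : ℝ) + s + p = (i + p : ℤ) + s := by push_cast; ring
  rw [rotation_piecewiseLinear, hshift, piecewiseLinear_intCast_add _ hs,
    piecewiseLinear_intCast_add _ hs, hk, hl, AffineMap.lineMap_apply_ring',
    AffineMap.lineMap_apply_ring', zpow_sub₀ two_ne_zero]
  field_simp
  ring

theorem isDyadic_rotation (p : ℤ) {x : ℝ} (hx : IsDyadic x) : IsDyadic (S.rotation p x) := by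
  obtain ⟨y, rfl⟩ := S.surjective_piecewiseLinear_point x
  obtain ⟨k, c, hc, hrot⟩ := S.exists_rotation_eq_two_zpow_mul_add p ⌊y⌋
  rw [hrot _ (Ico_subset_Icc_self (piecewiseLinear_mem_Ico S.strictMono_point y))]
  exact ((IsDyadic.two_zpow k).mul hx).add hc

theorem inThompsonT_circleHomeomorph_rotation (p : ℤ) :
    InThompsonT (circleHomeomorph (S.rotation p)) := by
  have rotation_inv_dyadic (x : ℝ) (hx : IsDyadic x) :
      IsDyadic (((S.rotation p)⁻¹ : CircleDeg1Liftˣ) x) := by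
    rw [rotation_inv]
    exact S.isDyadic_rotation (-p) hx
  refine ⟨isDyadicPt_circleHomeomorph_iff (fun _ ↦ S.isDyadic_rotation p) rotation_inv_dyadic,
    S.rotation p, (toOrderIso (S.rotation p)).strictMono,
    ⟨map_add_one _, circleHomeomorph_coe _⟩, n, fun i ↦ S.point i, ?_, ?_, ?_,
    fun i ↦ ⟨S.isDyadic_point i, S.isDyadic_rotation p (S.isDyadic_point i)⟩, fun i ↦ ?_⟩
  · exact fun i j hij ↦ S.strictMono_point (by exact_mod_cast hij)
  · simpa using S.point_zero
  · simpa using S.point_mul_natCast 1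
  · obtain ⟨k, c, -, hrot⟩ := S.exists_rotation_eq_two_zpow_mul_add p i
    exact ⟨k, c, by simpa using hrot⟩

/-- The subdivision with endpoints `0, 1/2, 3/4, …, 1 - 1/2 ^ (n - 1)`, obtained from `[0, 1]` by
halving the last arc `n - 1` times. -/
noncomputable def halving (n : ℕ) (hn : 0 < n) : DyadicSubdivision n where
  point i := (i / n : ℤ) + (1 - 2 ^ (-(i % n)))
  point_zero := by simp
  point_add_natCast i := by
    rw [Int.add_emod_right, Int.add_ediv_of_dvd_right dvd_rfl,
      Int.ediv_self (Int.natCast_ne_zero.2 hn.ne')]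
    push_cast
    ring
  exists_point_add_one i := by
    have hn' : (0 : ℤ) < n := Int.natCast_pos.2 hn
    have hdiv := Int.mul_ediv_add_emod i n
    have hnonneg := Int.emod_nonneg i hn'.ne'
    by_cases hlast : i % n + 1 < n
    · obtain ⟨hq, hr⟩ : (i + 1) / n = i / n ∧ (i + 1) % n = i % n + 1 :=
        (Int.ediv_emod_unique hn').2 ⟨by lia, by lia, hlast⟩
      refine ⟨-(i % n + 1), ?_⟩
      have hhalf : (2 : ℝ) ^ (-(i % n)) = 2 * 2 ^ (-(i % n + 1)) := by
        rw [← zpow_one_add₀ two_ne_zero]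
        congr 1
        ring
      rw [hq, hr, hhalf]
      ring
    · obtain ⟨hq, hr⟩ : (i + 1) / n = i / n + 1 ∧ (i + 1) % n = 0 :=
        (Int.ediv_emod_unique hn').2 ⟨by have := Int.emod_lt_of_pos i hn'; lia, le_rfl, hn'⟩
      refine ⟨-(i % n), ?_⟩
      rw [hq, hr]
      push_cast
      ring

end DyadicSubdivision

/-- (Ghys–Sergiescu) Every rational number is realized as a rotation number in
Thompson's group `T`: for every rational `q` with `0 ≤ q < 1` there is an element `f`
of `T` whose rotation number equals `q`, i.e. every lift of `f` has translation number
`q + m` for some integer `m` (and `f` does admit a lift). -/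
theorem thompsonT_realizes_rational_rotation_numbers :
    ∀ q : ℚ, 0 ≤ q → q < 1 →
      ∃ f : AddCircle (1:ℝ) ≃ₜ AddCircle (1:ℝ), InThompsonT f ∧
        (∃ F : CircleDeg1Lift,
          ∀ x : ℝ, f (x : AddCircle (1:ℝ)) = ((F x : ℝ) : AddCircle (1:ℝ))) ∧
        ∀ F : CircleDeg1Lift,
          (∀ x : ℝ, f (x : AddCircle (1:ℝ)) = ((F x : ℝ) : AddCircle (1:ℝ))) →
          ∃ m : ℤ, F.translationNumber = (q : ℝ) + m := by
  intro q _ _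
  let S := DyadicSubdivision.halving q.den q.pos
  refine ⟨circleHomeomorph (S.rotation q.num), S.inThompsonT_circleHomeomorph_rotation q.num,
    ⟨S.rotation q.num, circleHomeomorph_coe _⟩, fun F hF ↦ ?_⟩
  obtain ⟨m, hm⟩ := exists_translationNumber_eq_add_int
    (CircleDeg1Lift.toOrderIso (S.rotation q.num)).strictMono (fun x ↦ (hF x).symm)
  exact ⟨m, by rw [hm, S.translationNumber_rotation, Rat.cast_def]⟩
end
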